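/- Let a > 0 and b > 0 be real numbers, and define h(x) := ((cosh(a(2−x)) − cos(2b)cosh(ax))cos(bx) − sin(2b)sin(bx)cosh(ax))/(cosh(2a) − cos(2b)) and g(x) := (sin(2b)cos(bx)sinh(ax) − (sinh(a(2−x)) + cos(2b)sinh(ax))sin(bx))/(cosh(2a) − cos(2b)). Then (1/2)∫₀¹ (h(x)² + g(x)²) dx = (b·sinh(2a) − a·sin(2b))/(4ab(cosh(2a) − cos(2b))). -/

import Mathlib

/-!
With `z = a + ib`, the profiles are the real and imaginary parts of the single function
`h + ig = sinh (z(1-x)) / sinh z`. Since `|sinh w|² = (cosh (2 Re w) - cos (2 Im w)) / 2`, this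
gives `h² + g² = (cosh (2a(1-x)) - cos (2b(1-x))) / (cosh (2a) - cos (2b))`, which is integrated
termwise.
-/

open Real intervalIntegral MeasureTheory

noncomputable section

/-- The profile `h`. -/
def hProf (a b : ℝ) (x : ℝ) : ℝ :=
  ((Real.cosh (a * (2 - x)) - Real.cos (2 * b) * Real.cosh (a * x)) * Real.cos (b * x) -
    Real.sin (2 * b) * Real.sin (b * x) * Real.cosh (a * x)) /
  (Real.cosh (2 * a) - Real.cos (2 * b))

/-- The profile `g`. -/
def gProf (a b : ℝ) (x : ℝ) : ℝ :=
  (Real.sin (2 * b) * Real.cos (b * x) * Real.sinh (a * x) -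
    (Real.sinh (a * (2 - x)) + Real.cos (2 * b) * Real.sinh (a * x)) * Real.sin (b * x)) /
  (Real.cosh (2 * a) - Real.cos (2 * b))

lemma sinh_re (z : ℂ) : (Complex.sinh z).re = sinh z.re * cos z.im := by
  conv_lhs => rw [← Complex.re_add_im z, Complex.sinh_add, Complex.sinh_mul_I, Complex.cosh_mul_I]
  simp [← Complex.ofReal_sinh, ← Complex.ofReal_cosh, ← Complex.ofReal_sin, ← Complex.ofReal_cos]

lemma sinh_im (z : ℂ) : (Complex.sinh z).im = cosh z.re * sin z.im := by
  conv_lhs => rw [← Complex.re_add_im z, Complex.sinh_add, Complex.sinh_mul_I, Complex.cosh_mul_I]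
  simp [← Complex.ofReal_sinh, ← Complex.ofReal_cosh, ← Complex.ofReal_sin, ← Complex.ofReal_cos]

lemma normSq_sinh (z : ℂ) :
    Complex.normSq (Complex.sinh z) = (cosh (2 * z.re) - cos (2 * z.im)) / 2 := by
  rw [Complex.normSq_apply, sinh_re, sinh_im, cosh_two_mul, cos_two_mul]
  linear_combination cosh z.re ^ 2 * sin_sq_add_cos_sq z.im +
    (1 / 2 - cos z.im ^ 2) * cosh_sq_sub_sinh_sq z.re

lemma integral_cosh (a b : ℝ) : ∫ x in a..b, cosh x = sinh b - sinh a :=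
  integral_eq_sub_of_hasDerivAt (fun x _ => hasDerivAt_sinh x)
    (continuous_cosh.intervalIntegrable a b)

/-- The solution of the boundary value problem `f'' = z² f`, `f 0 = 1`, `f 1 = 0` on `[0, 1]`, whose
real and imaginary parts are the profiles `h` and `g`. It is the junk value `0` when
`sinh z = 0`. -/
def sinhProfile (z : ℂ) (x : ℝ) : ℂ :=
  Complex.sinh (z * (1 - x : ℝ)) / Complex.sinh z

lemma hProf_eq_sinhProfile_re (z : ℂ) (x : ℝ) : hProf z.re z.im x = (sinhProfile z x).re := by
  obtain ⟨a, b⟩ := z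
  have hnum : (cosh (a * (2 - x)) - cos (2 * b) * cosh (a * x)) * cos (b * x) -
        sin (2 * b) * sin (b * x) * cosh (a * x) =
      cosh (a + a * (1 - x)) * cos (b - b * (1 - x)) -
        cosh (a - a * (1 - x)) * cos (b + b * (1 - x)) := by
    rw [show b + b * (1 - x) = 2 * b - b * x by ring, cos_sub (2 * b)]
    ring_nf
  rw [sinhProfile, Complex.div_re, normSq_sinh]
  simp only [sinh_re, sinh_im, Complex.re_mul_ofReal, Complex.im_mul_ofReal]
  rw [hProf, hnum, cosh_add, cosh_sub, cos_add, cos_sub]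
  field

lemma gProf_eq_sinhProfile_im (z : ℂ) (x : ℝ) : gProf z.re z.im x = (sinhProfile z x).im := by
  obtain ⟨a, b⟩ := z
  have hnum : sin (2 * b) * cos (b * x) * sinh (a * x) -
        (sinh (a * (2 - x)) + cos (2 * b) * sinh (a * x)) * sin (b * x) =
      sinh (a - a * (1 - x)) * sin (b + b * (1 - x)) -
        sinh (a + a * (1 - x)) * sin (b - b * (1 - x)) := by
    rw [show b + b * (1 - x) = 2 * b - b * x by ring, sin_sub (2 * b)]
    ring_nf
  rw [sinhProfile, Complex.div_im, normSq_sinh]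
  simp only [sinh_re, sinh_im, Complex.re_mul_ofReal, Complex.im_mul_ofReal]
  rw [gProf, hnum, sinh_add, sinh_sub, sin_add, sin_sub]
  field

lemma hProf_sq_add_gProf_sq (z : ℂ) (x : ℝ) :
    hProf z.re z.im x ^ 2 + gProf z.re z.im x ^ 2 = Complex.normSq (sinhProfile z x) := by
  rw [hProf_eq_sinhProfile_re, gProf_eq_sinhProfile_im, Complex.normSq_apply, sq, sq]

lemma normSq_sinhProfile (z : ℂ) (x : ℝ) :
    Complex.normSq (sinhProfile z x) =
      (cosh (2 * z.re * (1 - x)) - cos (2 * z.im * (1 - x))) /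
        (cosh (2 * z.re) - cos (2 * z.im)) := by
  rw [sinhProfile, Complex.normSq_div, normSq_sinh, normSq_sinh,
    div_div_div_cancel_right₀ two_ne_zero, Complex.re_mul_ofReal, Complex.im_mul_ofReal,
    mul_assoc, mul_assoc]

lemma integral_normSq_sinhProfile {z : ℂ} (hre : z.re ≠ 0) (him : z.im ≠ 0) :
    ∫ x in (0:ℝ)..1, Complex.normSq (sinhProfile z x) =
      (sinh (2 * z.re) / (2 * z.re) - sin (2 * z.im) / (2 * z.im)) /
        (cosh (2 * z.re) - cos (2 * z.im)) := by
  have hcosh : ∫ t in (0:ℝ)..1, cosh (2 * z.re * t) = sinh (2 * z.re) / (2 * z.re) := by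
    rw [integral_comp_mul_left _ (by positivity), integral_cosh]
    simp [div_eq_inv_mul]
  have hcos : ∫ t in (0:ℝ)..1, cos (2 * z.im * t) = sin (2 * z.im) / (2 * z.im) := by
    rw [integral_comp_mul_left _ (by positivity), integral_cos]
    simp [div_eq_inv_mul]
  simp_rw [normSq_sinhProfile]
  rw [intervalIntegral.integral_div, integral_comp_sub_left
      (fun t => cosh (2 * z.re * t) - cos (2 * z.im * t)), sub_self, sub_zero,
    intervalIntegral.integral_sub (Continuous.intervalIntegrable (by fun_prop) _ _)
      (Continuous.intervalIntegrable (by fun_prop) _ _), hcosh, hcos]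

theorem profile_mean_square_general {a b : ℝ} (ha : a ≠ 0) (hb : b ≠ 0) :
    (1 / 2) * ∫ x in (0:ℝ)..1, (hProf a b x ^ 2 + gProf a b x ^ 2) =
      (b * sinh (2 * a) - a * sin (2 * b)) / (4 * a * b * (cosh (2 * a) - cos (2 * b))) := by
  simp_rw [hProf_sq_add_gProf_sq ⟨a, b⟩]
  rw [integral_normSq_sinhProfile (z := ⟨a, b⟩) ha hb]
  field

/-- `(1/2)∫₀¹ (h² + g²) = (b sinh(2a) − a sin(2b))/(4ab(cosh(2a) − cos(2b)))`. -/
theorem profile_mean_square (a b : ℝ) (ha : 0 < a) (hb : 0 < b) :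
    (1 / 2) * ∫ x in (0:ℝ)..1, ((hProf a b x) ^ 2 + (gProf a b x) ^ 2) =
      (b * Real.sinh (2 * a) - a * Real.sin (2 * b)) /
        (4 * a * b * (Real.cosh (2 * a) - Real.cos (2 * b))) :=
  profile_mean_square_general ha.ne' hb.ne'
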